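/- Let K be a field, n ≥ 1, let f₂ and f₃ be homogeneous polynomials of degrees 2 and 3 over K in the variables x₁,…,x_{n+1}, and set F = x₀·f₂ + f₃. Suppose W′ ⊆ K^{n+1} is a 2-dimensional linear subspace and φ: K² → W′ a linear parametrization such that the binary form g₂ = f₂∘φ is not identically zero and g₂ divides g₃ = f₃∘φ in K[s,t]. Then there exists a 2-dimensional linear subspace W ⊆ K^{n+2} not containing (1,0,…,0), mapping isomorphically onto W′ under the projection forgetting x₀, on which F vanishes identically; in fact W = {(ψ(u), u) : u ∈ W′} where ψ is the linear form on W′ with f₃ = −ψ·f₂ on W′. (Geometrically: every secant of Q ∩ C not contained in Q is the projection from the node of a line on X₀ = {F = 0} not passing through the node.) -/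

import Mathlib

/-!
By homogeneity the cofactor of `g₂` in `g₃` may be replaced by its component of degree one, so
`g₃ = g₂ * l` for a linear form `l` on the source of `φ`. Pulling `-l` back along a linear section
of `φ` gives a linear form `ψ` on `W'` with `f₃ = -ψ f₂`. Hence
`F (ψ u, u) = ψ u * f₂ u + f₃ u = 0`: the graph of `ψ` lies on the hypersurface `F = 0`, and it
misses `(1, 0, …, 0)` because its only point over `u = 0` is the origin.
-/

open MvPolynomial

/-- The cubic form `F = x₀ · f₂(x₁,…,x_{n+1}) + f₃(x₁,…,x_{n+1})` in the variables
`x₀, …, x_{n+1}`, where `f₂` and `f₃` are polynomials in the variables `x₁, …, x_{n+1}`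
(renamed into the last `n+1` of the `n+2` variables via `Fin.succ`). -/
noncomputable def nodalCubicForm {K : Type} [CommRing K] {n : ℕ}
    (f₂ f₃ : MvPolynomial (Fin (n + 1)) K) : MvPolynomial (Fin (n + 2)) K :=
  X 0 * rename Fin.succ f₂ + rename Fin.succ f₃

/-- Substitution of the linear parametrization `φ : K² → K^{n+1}` into a polynomial in
`n+1` variables, producing a binary form in the variables `s = X 0`, `t = X 1`:
each variable `xᵢ` is replaced by the linear form `φ(s,t)ᵢ`. -/
noncomputable def substLinear (K : Type) [CommRing K] {n : ℕ}
    (φ : (Fin 2 → K) →ₗ[K] (Fin (n + 1) → K)) :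
    MvPolynomial (Fin (n + 1)) K →ₐ[K] MvPolynomial (Fin 2) K :=
  aeval (fun i => ∑ j : Fin 2, C (φ (Pi.single j 1) i) * X j)

section LinearForms

variable {R : Type*} [CommSemiring R] {σ τ : Type*}

lemma exists_isHomogeneous_eq_mul_of_dvd {d e : ℕ} {p q : MvPolynomial σ R}
    (hp : p.IsHomogeneous d) (hq : q.IsHomogeneous (d + e)) (hpq : p ∣ q) :
    ∃ r : MvPolynomial σ R, r.IsHomogeneous e ∧ q = p * r := by
  let _ : GradedAlgebra (homogeneousSubmodule σ R) := gradedAlgebra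
  obtain ⟨r, rfl⟩ := hpq
  let component := DirectSum.decompose (homogeneousSubmodule σ R) r e
  refine ⟨component, component.2, ?_⟩
  calc p * r
      = DirectSum.decompose (homogeneousSubmodule σ R) (p * r) (d + e) :=
        (DirectSum.decompose_of_mem_same _ hq).symm
    _ = p * component := DirectSum.coe_decompose_mul_add_of_left_mem _ hp

lemma exists_linearMap_eq_eval_of_isHomogeneous_one {l : MvPolynomial σ R}
    (hl : l.IsHomogeneous 1) : ∃ L : (σ → R) →ₗ[R] R, ∀ v, L v = eval v l := by
  rw [← mem_homogeneousSubmodule, homogeneousSubmodule_one_eq_span_X,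
    Finsupp.mem_span_range_iff_exists_finsupp] at hl
  obtain ⟨c, rfl⟩ := hl
  exact ⟨c.sum fun i a => a • LinearMap.proj i, fun v => by simp [Finsupp.sum, smul_eval]⟩

variable [Fintype σ]

lemma eval_bind₁_toMvPolynomial (M : Matrix τ σ R) (f : MvPolynomial τ R) (v : σ → R) :
    eval v (bind₁ M.toMvPolynomial f) = eval (M.mulVec v) f := by
  have eval_linearForms : (fun i => eval v (M.toMvPolynomial i)) = M.mulVec v :=
    funext fun i => M.toMvPolynomial_eval_eq_apply i v
  rw [eval, eval₂Hom_bind₁]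
  exact congrArg (fun w => eval w f) eval_linearForms

lemma isHomogeneous_bind₁_toMvPolynomial (M : Matrix τ σ R) {d : ℕ} {f : MvPolynomial τ R}
    (hf : f.IsHomogeneous d) : (bind₁ M.toMvPolynomial f).IsHomogeneous d :=
  one_mul d ▸ hf.aeval M.toMvPolynomial M.toMvPolynomial_isHomogeneous

end LinearForms

lemma exists_linearMap_eval_eq_neg_mul_of_dvd {R σ τ : Type*} [CommRing R] [Fintype σ]
    [DecidableEq σ] {d : ℕ} {f g : MvPolynomial τ R}
    (hf : f.IsHomogeneous d) (hg : g.IsHomogeneous (d + 1))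
    (φ : (σ → R) →ₗ[R] (τ → R)) [Module.Projective R φ.range]
    (hdvd : bind₁ φ.toMatrix'.toMvPolynomial f ∣ bind₁ φ.toMatrix'.toMvPolynomial g) :
    ∃ ψ : φ.range →ₗ[R] R, ∀ u : φ.range,
      eval (u : τ → R) g = -(ψ u) * eval (u : τ → R) f := by
  obtain ⟨l, hl, hgl⟩ := exists_isHomogeneous_eq_mul_of_dvd
    (isHomogeneous_bind₁_toMvPolynomial _ hf) (isHomogeneous_bind₁_toMvPolynomial _ hg) hdvd
  obtain ⟨L, hL⟩ := exists_linearMap_eq_eval_of_isHomogeneous_one hl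
  have eval_range (v : σ → R) : eval (φ v) g = eval (φ v) f * L v := by
    simpa only [map_mul, eval_bind₁_toMvPolynomial, LinearMap.toMatrix'_mulVec, ← hL]
      using congrArg (eval v) hgl
  obtain ⟨s, hs⟩ := Module.projective_lifting_property φ.rangeRestrict LinearMap.id
    φ.surjective_rangeRestrict
  refine ⟨-(L ∘ₗ s), fun u => ?_⟩
  have section_apply : φ (s u) = u := congrArg Subtype.val (LinearMap.congr_fun hs u)
  simpa [section_apply, mul_comm] using eval_range (s u)

section ConsGraph

variable {R : Type*} [Semiring R] {n : ℕ} {W : Submodule R (Fin n → R)}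

/-- The graph `{(ψ u, u) : u ∈ W}` of a linear form `ψ` on a submodule `W` of `Rⁿ`, as a submodule
of `Rⁿ⁺¹` whose coordinate `0` holds the value of `ψ`. -/
def consGraph (ψ : W →ₗ[R] R) : Submodule R (Fin (n + 1) → R) :=
  (ψ.vecCons W.subtype).range

variable (ψ : W →ₗ[R] R)

lemma mem_consGraph {x : Fin (n + 1) → R} :
    x ∈ consGraph ψ ↔ ∃ u : W, x = Fin.cons (ψ u) (u : Fin n → R) :=
  exists_congr fun _ => eq_comm

lemma map_funLeft_succ_consGraph : (consGraph ψ).map (LinearMap.funLeft R R Fin.succ) = W := by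
  have comp_vecCons : LinearMap.funLeft R R Fin.succ ∘ₗ ψ.vecCons W.subtype = W.subtype := rfl
  rw [consGraph, ← LinearMap.range_comp, comp_vecCons, Submodule.range_subtype]

lemma finrank_consGraph : Module.finrank R (consGraph ψ) = Module.finrank R W := by
  have injective_vecCons : Function.Injective (ψ.vecCons W.subtype) :=
    .of_comp (f := LinearMap.funLeft R R Fin.succ) W.subtype_injective
  exact LinearMap.finrank_range_of_inj injective_vecCons

lemma single_zero_one_notMem_consGraph [Nontrivial R] :
    (Pi.single 0 1 : Fin (n + 1) → R) ∉ consGraph ψ := by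
  rw [mem_consGraph]
  rintro ⟨u, hu⟩
  have u_eq_zero : u = 0 := by
    ext i
    simpa using (congrFun hu i.succ).symm
  simpa [u_eq_zero] using congrFun hu 0

end ConsGraph

section NodalCubic

variable {K : Type} [CommRing K] {n : ℕ}

lemma eval_cons_nodalCubicForm (f₂ f₃ : MvPolynomial (Fin (n + 1)) K) (a : K)
    (u : Fin (n + 1) → K) :
    eval (Fin.cons a u : Fin (n + 2) → K) (nodalCubicForm f₂ f₃) =
      a * eval u f₂ + eval u f₃ := by
  simp [nodalCubicForm, eval_rename, Function.comp_def]

lemma substLinear_eq_bind₁_toMvPolynomial (φ : (Fin 2 → K) →ₗ[K] (Fin (n + 1) → K)) :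
    substLinear K φ = bind₁ φ.toMatrix'.toMvPolynomial := by
  ext1 i
  simp [substLinear, Matrix.toMvPolynomial, LinearMap.toMatrix'_apply, C_mul_X_eq_monomial]

theorem secant_lifts_to_line_general [Nontrivial K] {σ : Type*} [Fintype σ] [DecidableEq σ] {d : ℕ}
    {f g : MvPolynomial (Fin (n + 1)) K}
    (hf : f.IsHomogeneous d) (hg : g.IsHomogeneous (d + 1))
    (φ : (σ → K) →ₗ[K] (Fin (n + 1) → K)) [Module.Projective K φ.range]
    (hdvd : bind₁ φ.toMatrix'.toMvPolynomial f ∣ bind₁ φ.toMatrix'.toMvPolynomial g) :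
    ∃ W : Submodule K (Fin (n + 2) → K), Module.finrank K W = Module.finrank K φ.range ∧
      (Pi.single 0 1 : Fin (n + 2) → K) ∉ W ∧
      W.map (LinearMap.funLeft K K Fin.succ) = φ.range ∧
      (∀ w ∈ W, eval w (nodalCubicForm f g) = 0) ∧
      ∃ ψ : φ.range →ₗ[K] K,
        (∀ u : φ.range, eval (u : Fin (n + 1) → K) g = -(ψ u) * eval (u : Fin (n + 1) → K) f) ∧
        (W : Set (Fin (n + 2) → K)) =
          {x | ∃ u : φ.range, x = Fin.cons (ψ u) (u : Fin (n + 1) → K)} := by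
  obtain ⟨ψ, hψ⟩ := exists_linearMap_eval_eq_neg_mul_of_dvd hf hg φ hdvd
  have eval_eq_zero : ∀ w ∈ consGraph ψ, eval w (nodalCubicForm f g) = 0 := by
    intro w hw
    obtain ⟨u, rfl⟩ := (mem_consGraph ψ).mp hw
    rw [eval_cons_nodalCubicForm, hψ]
    ring
  exact ⟨consGraph ψ, finrank_consGraph ψ, single_zero_one_notMem_consGraph ψ,
    map_funLeft_succ_consGraph ψ, eval_eq_zero, ψ, hψ, Set.ext fun _ => mem_consGraph ψ⟩

end NodalCubic

/-- Lemma 2, second half (Finashin–Kharlamov): every secant of `Q ∩ C` not contained in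
`Q` is the projection from the node of a line on `X₀ = {x₀·f₂ + f₃ = 0}` not passing
through the node.  If `W′ ⊆ K^{n+1}` is 2-dimensional with linear parametrization `φ`
such that `g₂ = f₂∘φ ≠ 0` divides `g₃ = f₃∘φ`, then there is a 2-dimensional subspace
`W ⊆ K^{n+2}` avoiding `(1,0,…,0)`, projecting onto `W′`, on which `F = x₀·f₂ + f₃`
vanishes identically; explicitly `W = {(ψ(u), u) : u ∈ W′}` for the linear form `ψ` on
`W′` with `f₃ = -ψ·f₂` on `W′`. -/
theorem secant_lifts_to_line (K : Type) [Field K] (n : ℕ) (hn : 1 ≤ n)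
    (f₂ f₃ : MvPolynomial (Fin (n + 1)) K)
    (hf₂ : f₂.IsHomogeneous 2) (hf₃ : f₃.IsHomogeneous 3)
    (W' : Submodule K (Fin (n + 1) → K)) (hW'2 : Module.finrank K W' = 2)
    (φ : (Fin 2 → K) →ₗ[K] (Fin (n + 1) → K)) (hφ : LinearMap.range φ = W')
    (hg₂ : substLinear K φ f₂ ≠ 0)
    (hdvd : substLinear K φ f₂ ∣ substLinear K φ f₃) :
    ∃ W : Submodule K (Fin (n + 2) → K), Module.finrank K W = 2 ∧
      (Pi.single 0 1 : Fin (n + 2) → K) ∉ W ∧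
      W.map (LinearMap.funLeft K K Fin.succ) = W' ∧
      (∀ w ∈ W, eval w (nodalCubicForm f₂ f₃) = 0) ∧
      ∃ ψ : ↥W' →ₗ[K] K,
        (∀ u : ↥W', eval (u : Fin (n + 1) → K) f₃ = -(ψ u) * eval (u : Fin (n + 1) → K) f₂) ∧
        (W : Set (Fin (n + 2) → K)) =
          {x | ∃ u : ↥W', x = Fin.cons (ψ u) (u : Fin (n + 1) → K)} := by
  subst hφ
  rw [substLinear_eq_bind₁_toMvPolynomial] at hdvd
  simpa only [hW'2] using secant_lifts_to_line_general hf₂ hf₃ φ hdvd
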